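/- arXiv:1512.01160 — 2 statements merged into one kernel-verified Lean document; each statement's English description precedes it below -/
import Mathlib

section
/- Let α > 0, β > 0, L = 2π/α, and M, N ≥ 1. Let φ_1, …, φ_N : ℝ → ℂ^M be C¹ functions, L-periodic, and orthonormal in L²((0, L); ℂ^M), i.e. ∫_0^L ⟨φ_n(x), φ_m(x)⟩ dx = δ_{nm}. Define the M×M matrix U(x) := ∑_{n=1}^N φ_n(x) φ_n(x)^*. Then ∫_0^L Tr[U(x)³] dx ≤ K₁(β)² · ∑_{n=1}^N ∑_{j=1}^M ∫_0^L ( |φ_n'(x, j)|² + α² β |φ_n(x, j)|² ) dx, where φ_n(x, j) denotes the j-th component of φ_n(x). -/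
open Real MeasureTheory

/-- The sharp constant `K₁(β) = sup_{λ>0} √λ · coth(π√(β+λ)) / √(β+λ)`. -/
noncomputable def K1 (β : ℝ) : ℝ :=
  ⨆ l : Set.Ioi (0 : ℝ),
    Real.sqrt l * (Real.cosh (π * Real.sqrt (β + l)) / Real.sinh (π * Real.sqrt (β + l))) /
      Real.sqrt (β + l)

lemma aux_per_deriv (v : ℝ → ℂ) (L : ℝ) (h : Function.Periodic v L) :
    Function.Periodic (deriv v) L := by
  intro x
  rw [← deriv_comp_add_const]
  congr 1
  funext y
  exact h y

lemma aux_ric (v : ℝ → ℂ) (hv : ContDiff ℝ 1 v) (L κ : ℝ)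
    (h : Function.Periodic v L) (hL : 0 < L) (x : ℝ) :
    ‖v x‖ ^ 2 * (2 * κ * (Real.sinh (κ * L / 2) / Real.cosh (κ * L / 2))) ≤
      ∫ y in (0:ℝ)..L, (‖deriv v y‖ ^ 2 + κ ^ 2 * ‖v y‖ ^ 2) := by
  have hd : ∀ y, HasDerivAt v (deriv v y) y := fun y =>
    (hv.differentiable (by norm_num) y).hasDerivAt
  have hc : Continuous v := hv.continuous
  have hc' : Continuous (deriv v) := hv.continuous_deriv (by norm_num)
  set c : ℝ := x + L / 2 with hcdef
  set w : ℝ → ℝ := fun y => κ * (Real.sinh (κ * (y - c)) / Real.cosh (κ * (y - c))) with hw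
  have hch : ∀ y, Real.cosh y ≠ 0 := fun y => (Real.cosh_pos y).ne'
  have hwc : Continuous w := by
    apply continuous_const.mul
    exact Continuous.div (by fun_prop) (by fun_prop) (fun y => hch _)
  have hwd : ∀ y, HasDerivAt w (κ ^ 2 - w y ^ 2) y := by
    intro y
    have h1 : HasDerivAt (fun y => κ * (y - c)) κ y := by
      simpa using ((hasDerivAt_id y).sub_const c).const_mul κ
    have h2 := ((h1.sinh.div h1.cosh (hch _)).const_mul κ)
    refine HasDerivAt.congr_deriv h2 ?_
    show _ = κ ^ 2 - (κ * (Real.sinh (κ * (y - c)) / Real.cosh (κ * (y - c)))) ^ 2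
    have := hch (κ * (y - c))
    field_simp
  have hFd : ∀ y, HasDerivAt (fun y => w y * ‖v y‖ ^ 2)
      ((κ ^ 2 - w y ^ 2) * ‖v y‖ ^ 2 + w y * (2 * inner ℝ (v y) (deriv v y))) y := by
    intro y
    exact (hwd y).mul (hd y).norm_sq
  have hint : ∫ y in x..(x + L),
      ((κ ^ 2 - w y ^ 2) * ‖v y‖ ^ 2 + w y * (2 * inner ℝ (v y) (deriv v y))) =
      w (x + L) * ‖v (x + L)‖ ^ 2 - w x * ‖v x‖ ^ 2 := by
    apply intervalIntegral.integral_eq_sub_of_hasDerivAt (fun y _ => hFd y)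
    apply Continuous.intervalIntegrable
    fun_prop
  have hper : Function.Periodic (fun y => ‖deriv v y‖ ^ 2 + κ ^ 2 * ‖v y‖ ^ 2) L := by
    intro y
    simp only [aux_per_deriv v L h y, h y]
  have hshift := hper.intervalIntegral_add_eq 0 x
  rw [zero_add] at hshift
  rw [hshift]
  have hle : ∫ y in x..(x + L),
      ((κ ^ 2 - w y ^ 2) * ‖v y‖ ^ 2 + w y * (2 * inner ℝ (v y) (deriv v y))) ≤
      ∫ y in x..(x + L), (‖deriv v y‖ ^ 2 + κ ^ 2 * ‖v y‖ ^ 2) := by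
    apply intervalIntegral.integral_mono_on (by linarith)
    · apply Continuous.intervalIntegrable
      fun_prop
    · apply Continuous.intervalIntegrable
      fun_prop
    · intro y _
      have h1 := norm_sub_sq_real (w y • v y) (deriv v y)
      rw [real_inner_smul_left, norm_smul, mul_pow, Real.norm_eq_abs, sq_abs] at h1
      have h2 := sq_nonneg ‖w y • v y - deriv v y‖
      nlinarith
  rw [hint, h x] at hle
  have e1 : w (x + L) = κ * (Real.sinh (κ * L / 2) / Real.cosh (κ * L / 2)) := by
    simp only [hw, hcdef]
    rw [show κ * (x + L - (x + L / 2)) = κ * L / 2 by ring]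
  have e2 : w x = -(κ * (Real.sinh (κ * L / 2) / Real.cosh (κ * L / 2))) := by
    simp only [hw, hcdef]
    rw [show κ * (x - (x + L / 2)) = -(κ * L / 2) by ring, Real.sinh_neg, Real.cosh_neg]
    ring
  rw [e1, e2] at hle
  linarith

lemma aux_K1_bdd (β : ℝ) (hβ : 0 < β) : BddAbove (Set.range fun l : Set.Ioi (0 : ℝ) =>
    Real.sqrt l * (Real.cosh (π * Real.sqrt (β + l)) / Real.sinh (π * Real.sqrt (β + l))) /
      Real.sqrt (β + l)) := by
  refine ⟨1 + 1 / Real.sinh (π * Real.sqrt β), ?_⟩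
  rintro _ ⟨⟨l, hl⟩, rfl⟩
  have hl : 0 < l := hl
  simp only
  have hs : 0 < Real.sqrt (β + l) := Real.sqrt_pos.2 (by linarith)
  have hb : 0 < Real.sqrt β := Real.sqrt_pos.2 hβ
  have h1 : Real.sqrt l ≤ Real.sqrt (β + l) := Real.sqrt_le_sqrt (by linarith)
  have h2 : Real.sqrt β ≤ Real.sqrt (β + l) := Real.sqrt_le_sqrt (by linarith)
  have h3 : Real.sinh (π * Real.sqrt β) ≤ Real.sinh (π * Real.sqrt (β + l)) :=
    Real.sinh_le_sinh.2 (mul_le_mul_of_nonneg_left h2 Real.pi_pos.le)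
  have h4 : 0 < Real.sinh (π * Real.sqrt β) := Real.sinh_pos_iff.2 (mul_pos Real.pi_pos hb)
  have h5 := h4.trans_le h3
  set t := π * Real.sqrt (β + l)
  have ht : 0 < t := mul_pos Real.pi_pos hs
  have h6 : Real.cosh t ≤ Real.sinh t + 1 := by
    have := Real.cosh_sub_sinh t
    have : Real.exp (-t) ≤ 1 := Real.exp_le_one_iff.2 (by linarith)
    linarith
  have h7 : Real.cosh t / Real.sinh t ≤ 1 + 1 / Real.sinh (π * Real.sqrt β) := by
    calc _ ≤ (Real.sinh t + 1) / Real.sinh t := by gcongr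
      _ = 1 + 1 / Real.sinh t := by field_simp
      _ ≤ _ := by gcongr
  have h8 : 0 ≤ Real.cosh t / Real.sinh t := div_nonneg (Real.cosh_pos _).le h5.le
  rw [div_le_iff₀ hs, mul_comm]
  exact mul_le_mul h7 h1 (Real.sqrt_nonneg _) (by positivity)

lemma aux_K1_le (β l : ℝ) (hβ : 0 < β) (hl : 0 < l) :
    Real.sqrt l * (Real.cosh (π * Real.sqrt (β + l)) / Real.sinh (π * Real.sqrt (β + l))) /
      Real.sqrt (β + l) ≤ K1 β :=
  le_ciSup (aux_K1_bdd β hβ) (⟨l, hl⟩ : Set.Ioi (0 : ℝ))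

lemma aux_K1_pos (β : ℝ) (hβ : 0 < β) : 0 < K1 β := by
  refine lt_of_lt_of_le ?_ (aux_K1_le β 1 hβ one_pos)
  have hs : 0 < Real.sqrt (β + 1) := Real.sqrt_pos.2 (by linarith)
  have h5 := Real.sinh_pos_iff.2 (mul_pos Real.pi_pos hs)
  have := Real.cosh_pos (π * Real.sqrt (β + 1))
  positivity

lemma aux_pt (α β : ℝ) (hα : 0 < α) (hβ : 0 < β) (L : ℝ) (hL : L = 2 * π / α)
    (v : ℝ → ℂ) (hv : ContDiff ℝ 1 v) (h : Function.Periodic v L) (s : ℝ) (hs : 0 < s) (x : ℝ) :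
    2 * s * ‖v x‖ ^ 2 ≤ K1 β *
      ∫ y in (0:ℝ)..L, (‖deriv v y‖ ^ 2 + (α ^ 2 * β + s ^ 2) * ‖v y‖ ^ 2) := by
  have hLp : 0 < L := by rw [hL]; positivity
  set l := (s / α) ^ 2 with hl
  have hlp : 0 < l := by positivity
  have hK := aux_K1_le β l hβ hlp
  have hm : 0 < Real.sqrt (β + l) := Real.sqrt_pos.2 (by linarith)
  have hsq : Real.sqrt (β + l) ^ 2 = β + l := Real.sq_sqrt (by linarith)
  have hsl : Real.sqrt l = s / α := Real.sqrt_sq (by positivity)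
  rw [hsl] at hK
  set m := Real.sqrt (β + l)
  have hr := aux_ric v hv L (α * m) h hLp x
  have e1 : α * m * L / 2 = π * m := by rw [hL]; field_simp
  have e2 : (α * m) ^ 2 = α ^ 2 * β + s ^ 2 := by
    rw [mul_pow, hsq, hl]; field_simp
  rw [e1, e2] at hr
  have hsh := Real.sinh_pos_iff.2 (mul_pos Real.pi_pos hm)
  have hch := Real.cosh_pos (π * m)
  have hK0 := aux_K1_pos β hβ
  refine le_trans ?_ (mul_le_mul_of_nonneg_left hr hK0.le)
  have h1 : s ≤ K1 β * (α * m * (Real.sinh (π * m) / Real.cosh (π * m))) := by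
    have := mul_le_mul_of_nonneg_right hK
      (show 0 ≤ α * m * (Real.sinh (π * m) / Real.cosh (π * m)) by positivity)
    refine le_trans (le_of_eq ?_) this
    field_simp
  nlinarith [mul_le_mul_of_nonneg_right h1 (sq_nonneg ‖v x‖)]

lemma aux_spec (M : ℕ) (A : Matrix (Fin M) (Fin M) ℂ) (hA : A.IsHermitian) :
    ∃ (V : Matrix (Fin M) (Fin M) ℂ) (μ : Fin M → ℝ), V * V.conjTranspose = 1 ∧
      V.conjTranspose * V = 1 ∧ A * V = V * Matrix.diagonal (fun k => (μ k : ℂ)) ∧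
      (A ^ 3).trace = ∑ k, (μ k : ℂ) ^ 3 := by
  set V : Matrix (Fin M) (Fin M) ℂ := (hA.eigenvectorUnitary : Matrix (Fin M) (Fin M) ℂ) with hV
  set D : Matrix (Fin M) (Fin M) ℂ := Matrix.diagonal (fun k => (hA.eigenvalues k : ℂ)) with hD
  have h1 : V * V.conjTranspose = 1 := Unitary.coe_mul_star_self hA.eigenvectorUnitary
  have h2 : V.conjTranspose * V = 1 := Unitary.coe_star_mul_self hA.eigenvectorUnitary
  have h3 : A = V * D * V.conjTranspose := hA.spectral_theorem
  have h4 : A * V = V * D := by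
    conv_lhs => rw [h3]
    rw [Matrix.mul_assoc, h2, Matrix.mul_one]
  refine ⟨V, hA.eigenvalues, h1, h2, h4, ?_⟩
  have h5 : A ^ 3 = V * (D ^ 3 * V.conjTranspose) := by
    calc A ^ 3 = A * (A * (A * (V * V.conjTranspose))) := by
          rw [h1, Matrix.mul_one]; noncomm_ring
      _ = A * (A * ((A * V) * V.conjTranspose)) := by simp only [Matrix.mul_assoc]
      _ = A * ((A * V) * (D * V.conjTranspose)) := by
          conv_lhs => rw [h4]
          simp only [Matrix.mul_assoc]
      _ = (A * V) * (D * (D * V.conjTranspose)) := by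
          conv_lhs => rw [h4]
          simp only [Matrix.mul_assoc]
      _ = _ := by rw [h4, pow_three]; simp only [Matrix.mul_assoc]
  rw [h5, Matrix.trace_mul_comm, Matrix.mul_assoc, h2, Matrix.mul_one, hD, Matrix.diagonal_pow,
    Matrix.trace_diagonal]
  simp

lemma aux_expand (M N : ℕ) (f : Fin N → Fin M → ℝ → ℂ) (hf : ∀ n j, Continuous (f n j))
    (ξ : Fin N → ℂ) (L : ℝ) :
    ∑ j, ∫ y in (0:ℝ)..L, ‖∑ n, ξ n * f n j y‖ ^ 2 =
      (∑ n, ∑ m, ξ n * (starRingEnd ℂ) (ξ m) *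
        ∫ y in (0:ℝ)..L, ∑ j, f n j y * (starRingEnd ℂ) (f m j y)).re := by
  have hcc : ∀ n j, Continuous fun y => (starRingEnd ℂ) (f n j y) := fun n j =>
    Complex.continuous_conj.comp (hf n j)
  have key : ((∑ j, ∫ y in (0:ℝ)..L, ‖∑ n, ξ n * f n j y‖ ^ 2 : ℝ) : ℂ) =
      ∑ n, ∑ m, ξ n * (starRingEnd ℂ) (ξ m) *
        ∫ y in (0:ℝ)..L, ∑ j, f n j y * (starRingEnd ℂ) (f m j y) := by
    have e : ∀ j, ((∫ y in (0:ℝ)..L, ‖∑ n, ξ n * f n j y‖ ^ 2 : ℝ) : ℂ) =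
        ∑ n, ∑ m, ξ n * (starRingEnd ℂ) (ξ m) *
          ∫ y in (0:ℝ)..L, f n j y * (starRingEnd ℂ) (f m j y) := by
      intro j
      rw [← intervalIntegral.integral_ofReal]
      have : ∀ y, ((‖∑ n, ξ n * f n j y‖ ^ 2 : ℝ) : ℂ) =
          ∑ n, ∑ m, ξ n * (starRingEnd ℂ) (ξ m) * (f n j y * (starRingEnd ℂ) (f m j y)) := by
        intro y
        rw [Complex.ofReal_pow, ← Complex.mul_conj', map_sum, Finset.sum_mul_sum]
        refine Finset.sum_congr rfl fun n _ => Finset.sum_congr rfl fun m _ => ?_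
        rw [map_mul]; ring
      simp_rw [this]
      rw [intervalIntegral.integral_finsetSum]
      · refine Finset.sum_congr rfl fun n _ => ?_
        rw [intervalIntegral.integral_finsetSum]
        · refine Finset.sum_congr rfl fun m _ => ?_
          rw [intervalIntegral.integral_const_mul]
        · intro m _
          exact (continuous_const.mul ((hf n j).mul (hcc m j))).intervalIntegrable _ _
      · intro n _
        exact (continuous_finsetSum _ fun m _ =>
          continuous_const.mul ((hf n j).mul (hcc m j))).intervalIntegrable _ _
    rw [Complex.ofReal_sum]
    simp_rw [e]
    rw [Finset.sum_comm]
    refine Finset.sum_congr rfl fun n _ => ?_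
    rw [Finset.sum_comm]
    refine Finset.sum_congr rfl fun m _ => ?_
    rw [← Finset.mul_sum, intervalIntegral.integral_finsetSum]
    intro j _
    exact ((hf n j).mul (hcc m j)).intervalIntegrable _ _
  rw [← key, Complex.ofReal_re]

lemma aux_eigen (α β : ℝ) (hα : 0 < α) (hβ : 0 < β) (L : ℝ) (hL : L = 2 * π / α)
    (M N : ℕ)
    (φ : Fin N → Fin M → ℝ → ℂ) (hφ : ∀ n j, ContDiff ℝ 1 (φ n j))
    (hper : ∀ n j, Function.Periodic (φ n j) L)
    (hortho : ∀ n m, (∫ x in (0:ℝ)..L, ∑ j, φ n j x * (starRingEnd ℂ) (φ m j x)) =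
      if n = m then 1 else 0)
    (x : ℝ) (ξ : Fin N → ℂ) (e : Fin M → ℂ) (μ : ℝ)
    (h1 : ∀ j, ∑ n, ξ n * φ n j x = e j * μ)
    (h2 : ∑ n, ξ n * (starRingEnd ℂ) (ξ n) = μ)
    (h3 : ∑ j, (starRingEnd ℂ) (e j) * e j = 1) :
    μ ^ 3 ≤ K1 β ^ 2 * (∑ n, ∑ m, ξ n * (starRingEnd ℂ) (ξ m) *
        ((∫ y in (0:ℝ)..L, ∑ j, deriv (φ n j) y * (starRingEnd ℂ) (deriv (φ m j) y)) +
          ((α ^ 2 * β : ℝ) : ℂ) * if n = m then 1 else 0)).re := by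
  have hK := aux_K1_pos β hβ
  have hLp : 0 < L := by rw [hL]; positivity
  have hcd : ∀ n j, Continuous (deriv (φ n j)) := fun n j =>
    (hφ n j).continuous_deriv (by norm_num)
  set T : ℝ := (∑ n, ∑ m, ξ n * (starRingEnd ℂ) (ξ m) *
        ∫ y in (0:ℝ)..L, ∑ j, deriv (φ n j) y * (starRingEnd ℂ) (deriv (φ m j) y)).re with hT
  have hA : (∑ n, ∑ m, ξ n * (starRingEnd ℂ) (ξ m) *
        ((∫ y in (0:ℝ)..L, ∑ j, deriv (φ n j) y * (starRingEnd ℂ) (deriv (φ m j) y)) +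
          ((α ^ 2 * β : ℝ) : ℂ) * if n = m then 1 else 0)).re = T + α ^ 2 * β * μ := by
    simp only [mul_add, Finset.sum_add_distrib, Complex.add_re]
    congr 1
    have : (∑ n, ∑ m, ξ n * (starRingEnd ℂ) (ξ m) *
        (((α ^ 2 * β : ℝ) : ℂ) * if n = m then 1 else 0)) = ((α ^ 2 * β * μ : ℝ) : ℂ) := by
      rw [Complex.ofReal_mul (α ^ 2 * β) μ, ← h2, Finset.mul_sum]
      refine Finset.sum_congr rfl fun n _ => ?_
      simp only [mul_ite, mul_one, mul_zero, Finset.sum_ite_eq, Finset.mem_univ, if_true]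
      ring
    rw [this, Complex.ofReal_re]
  have hB : ∑ j, ∫ y in (0:ℝ)..L, ‖∑ n, ξ n * φ n j y‖ ^ 2 = μ := by
    rw [aux_expand M N φ (fun n j => (hφ n j).continuous)]
    simp_rw [hortho]
    simp only [mul_ite, mul_one, mul_zero, Finset.sum_ite_eq, Finset.mem_univ, if_true]
    rw [h2, Complex.ofReal_re]
  have hTe := aux_expand M N (fun n j => deriv (φ n j)) hcd ξ L
  rw [← hT] at hTe
  have hT0 : 0 ≤ T := by
    rw [← hTe]
    exact Finset.sum_nonneg fun j _ => intervalIntegral.integral_nonneg hLp.le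
      fun y _ => by positivity
  have hμ0 : 0 ≤ μ := by
    rw [← hB]
    exact Finset.sum_nonneg fun j _ => intervalIntegral.integral_nonneg hLp.le
      fun y _ => by positivity
  rw [hA]
  rcases hμ0.eq_or_lt with h0 | hpos
  · rw [← h0]
    simp only [ne_eq, OfNat.ofNat_ne_zero, not_false_eq_true, zero_pow, mul_zero, add_zero]
    positivity
  have hcu : ∀ j, ContDiff ℝ 1 (fun y => ∑ n, ξ n * φ n j y) := fun j =>
    ContDiff.sum fun n _ => contDiff_const.mul (hφ n j)
  have hdu : ∀ j y, deriv (fun y => ∑ n, ξ n * φ n j y) y = ∑ n, ξ n * deriv (φ n j) y := by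
    intro j y
    have : HasDerivAt (fun y => ∑ n, ξ n * φ n j y) (∑ n, ξ n * deriv (φ n j) y) y :=
      HasDerivAt.fun_sum fun n _ =>
        (((hφ n j).differentiable (by norm_num) y).hasDerivAt).const_mul (ξ n)
    exact this.deriv
  have hpu : ∀ j, Function.Periodic (fun y => ∑ n, ξ n * φ n j y) L := by
    intro j y
    simp only [hper _ _ y]
  set s := μ / K1 β with hs
  have hsp : 0 < s := by positivity
  have hj := fun j => aux_pt α β hα hβ L hL _ (hcu j) (hpu j) s hsp x
  have hsum := Finset.sum_le_sum fun j (_ : j ∈ Finset.univ) => hj j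
  rw [← Finset.mul_sum, ← Finset.mul_sum] at hsum
  have hl : ∑ j, ‖∑ n, ξ n * φ n j x‖ ^ 2 = μ ^ 2 := by
    simp_rw [h1]
    have : ((∑ j, ‖e j‖ ^ 2 : ℝ) : ℂ) = 1 := by
      rw [← h3, Complex.ofReal_sum]
      refine Finset.sum_congr rfl fun j _ => ?_
      rw [Complex.ofReal_pow, ← Complex.conj_mul']
    have h4 : ∑ j, ‖e j‖ ^ 2 = 1 := by exact_mod_cast this
    simp only [norm_mul, mul_pow, Complex.norm_real, Real.norm_eq_abs, sq_abs]
    rw [← Finset.sum_mul, h4, one_mul]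
  have hr : ∑ j, ∫ y in (0:ℝ)..L, (‖deriv (fun y => ∑ n, ξ n * φ n j y) y‖ ^ 2 +
      (α ^ 2 * β + s ^ 2) * ‖∑ n, ξ n * φ n j y‖ ^ 2) = T + (α ^ 2 * β + s ^ 2) * μ := by
    rw [← hTe]
    conv_rhs => rw [← hB]
    rw [Finset.mul_sum, ← Finset.sum_add_distrib]
    refine Finset.sum_congr rfl fun j _ => ?_
    simp_rw [hdu]
    rw [intervalIntegral.integral_add, intervalIntegral.integral_const_mul]
    · apply Continuous.intervalIntegrable
      have := fun n => hcd n j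
      fun_prop
    · apply Continuous.intervalIntegrable
      have := fun n => (hφ n j).continuous
      fun_prop
  rw [hl, hr] at hsum
  have e1 : s * K1 β = μ := by rw [hs]; field_simp
  have h5 := mul_le_mul_of_nonneg_right hsum hK.le
  have e2 : 2 * s * μ ^ 2 * K1 β = 2 * μ ^ 3 := by
    calc _ = 2 * (s * K1 β) * μ ^ 2 := by ring
      _ = _ := by rw [e1]; ring
  have e3 : K1 β * (T + (α ^ 2 * β + s ^ 2) * μ) * K1 β =
      K1 β ^ 2 * (T + α ^ 2 * β * μ) + μ ^ 3 := by
    calc _ = K1 β ^ 2 * (T + α ^ 2 * β * μ) + (s * K1 β) ^ 2 * μ := by ring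
      _ = _ := by rw [e1]; ring
  rw [e2, e3] at h5
  linarith

lemma aux_point (α β : ℝ) (hα : 0 < α) (hβ : 0 < β) (L : ℝ) (hL : L = 2 * π / α)
    (M N : ℕ)
    (φ : Fin N → Fin M → ℝ → ℂ) (hφ : ∀ n j, ContDiff ℝ 1 (φ n j))
    (hper : ∀ n j, Function.Periodic (φ n j) L)
    (hortho : ∀ n m, (∫ x in (0:ℝ)..L, ∑ j, φ n j x * (starRingEnd ℂ) (φ m j x)) =
      if n = m then 1 else 0)
    (x : ℝ) (A : Matrix (Fin M) (Fin M) ℂ)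
    (hA : A = Matrix.of fun j k => ∑ n, φ n j x * (starRingEnd ℂ) (φ n k x)) :
    ((A ^ 3).trace).re ≤ K1 β ^ 2 * (∑ n, ∑ m, (∑ j, φ m j x * (starRingEnd ℂ) (φ n j x)) *
        ((∫ y in (0:ℝ)..L, ∑ j, deriv (φ n j) y * (starRingEnd ℂ) (deriv (φ m j) y)) +
          ((α ^ 2 * β : ℝ) : ℂ) * if n = m then 1 else 0)).re := by
  set P : Matrix (Fin M) (Fin N) ℂ := Matrix.of fun j n => φ n j x with hP
  have hAP : A = P * P.conjTranspose := by
    rw [hA]; ext j k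
    simp [hP, Matrix.mul_apply]
  have hH : A.IsHermitian := by
    rw [hAP]; exact Matrix.isHermitian_mul_conjTranspose_self P
  obtain ⟨V, μ, hV1, hV2, hAV, htr⟩ := aux_spec M A hH
  set X : Matrix (Fin N) (Fin M) ℂ := P.conjTranspose * V with hX
  have q1 : P * X = V * Matrix.diagonal (fun k => (μ k : ℂ)) := by
    rw [hX, ← Matrix.mul_assoc, ← hAP, hAV]
  have q2 : X.conjTranspose * X = Matrix.diagonal (fun k => (μ k : ℂ)) := by
    rw [hX, Matrix.conjTranspose_mul, Matrix.conjTranspose_conjTranspose, Matrix.mul_assoc,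
      ← hX, q1, ← Matrix.mul_assoc, hV2, Matrix.one_mul]
  have q3 : X * X.conjTranspose = P.conjTranspose * P := by
    rw [hX, Matrix.conjTranspose_mul, Matrix.conjTranspose_conjTranspose, Matrix.mul_assoc,
      ← Matrix.mul_assoc V, hV1, Matrix.one_mul]
  have hk : ∀ k, μ k ^ 3 ≤ _ := fun k =>
    aux_eigen α β hα hβ L hL M N φ hφ hper hortho x (fun n => X n k) (fun j => V j k) (μ k)
      (by
        intro j
        have := congrFun (congrFun q1 j) k
        rw [Matrix.mul_apply, Matrix.mul_diagonal] at this
        rw [← this]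
        refine Finset.sum_congr rfl fun n _ => ?_
        simp [hP, mul_comm])
      (by
        have := congrFun (congrFun q2 k) k
        rw [Matrix.mul_apply, Matrix.diagonal_apply_eq] at this
        rw [← this]
        refine Finset.sum_congr rfl fun n _ => ?_
        simp [mul_comm])
      (by
        have := congrFun (congrFun hV2 k) k
        rw [Matrix.mul_apply, Matrix.one_apply_eq] at this
        rw [← this]
        refine Finset.sum_congr rfl fun n _ => ?_
        simp)
  have htr' : ((A ^ 3).trace).re = ∑ k, μ k ^ 3 := by
    rw [htr]
    have : (∑ k, (μ k : ℂ) ^ 3) = ((∑ k, μ k ^ 3 : ℝ) : ℂ) := by push_cast; rfl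
    rw [this, Complex.ofReal_re]
  rw [htr']
  refine (Finset.sum_le_sum fun k (_ : k ∈ Finset.univ) => hk k).trans (le_of_eq ?_)
  rw [← Finset.mul_sum, ← Complex.re_sum]
  congr 2
  rw [Finset.sum_comm]
  refine Finset.sum_congr rfl fun n _ => ?_
  rw [Finset.sum_comm]
  refine Finset.sum_congr rfl fun m _ => ?_
  rw [← Finset.sum_mul]
  congr 1
  have := congrFun (congrFun q3 n) m
  rw [Matrix.mul_apply, Matrix.mul_apply] at this
  simp only [Matrix.conjTranspose_apply, hP, Matrix.of_apply] at this
  simp only [starRingEnd_apply]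
  rw [this]
  exact Finset.sum_congr rfl fun j _ => mul_comm _ _

theorem stmt_11 (α β : ℝ) (hα : 0 < α) (hβ : 0 < β) (L : ℝ) (hL : L = 2 * π / α)
    (M N : ℕ) (hM : 1 ≤ M) (hN : 1 ≤ N)
    (φ : Fin N → ℝ → Fin M → ℂ) (hφ : ∀ n, ContDiff ℝ 1 (φ n))
    (hper : ∀ n, Function.Periodic (φ n) L)
    (hortho : ∀ n m, (∫ x in (0:ℝ)..L, ∑ j, φ n x j * (starRingEnd ℂ) (φ m x j)) =
      if n = m then 1 else 0)
    (U : ℝ → Matrix (Fin M) (Fin M) ℂ)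
    (hU : ∀ x, U x = Matrix.of fun j k => ∑ n, φ n x j * (starRingEnd ℂ) (φ n x k)) :
    (∫ x in (0:ℝ)..L, ((U x ^ 3).trace).re) ≤
      K1 β ^ 2 * ∑ n, ∑ j, ∫ x in (0:ℝ)..L,
        (‖deriv (fun t => φ n t j) x‖ ^ 2 + α ^ 2 * β * ‖φ n x j‖ ^ 2) := by
  have hLp : 0 < L := by rw [hL]; positivity
  have hφ' : ∀ n j, ContDiff ℝ 1 (fun t => φ n t j) := fun n j => contDiff_pi.1 (hφ n) j
  have hc : ∀ n j, Continuous (fun t => φ n t j) := fun n j => (hφ' n j).continuous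
  have hcc : ∀ n j, Continuous fun y => (starRingEnd ℂ) (φ n y j) := fun n j =>
    Complex.continuous_conj.comp (hc n j)
  have hcd : ∀ n j, Continuous (deriv (fun t => φ n t j)) := fun n j =>
    (hφ' n j).continuous_deriv (by norm_num)
  have hp' : ∀ n j, Function.Periodic (fun t => φ n t j) L := fun n j y =>
    congrFun (hper n y) j
  set a : Fin N → Fin N → ℂ := fun n m =>
    (∫ y in (0:ℝ)..L, ∑ j, deriv (fun t => φ n t j) y *
      (starRingEnd ℂ) (deriv (fun t => φ m t j) y)) +
          ((α ^ 2 * β : ℝ) : ℂ) * if n = m then 1 else 0 with ha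
  have hpt : ∀ x, ((U x ^ 3).trace).re ≤ K1 β ^ 2 *
      (∑ n, ∑ m, (∑ j, φ m x j * (starRingEnd ℂ) (φ n x j)) * a n m).re := fun x =>
    aux_point α β hα hβ L hL M N (fun n j t => φ n t j) hφ' hp' hortho x (U x) (hU x)
  have hUc : Continuous U := by
    have : U = fun x => Matrix.of fun j k => ∑ n, φ n x j * (starRingEnd ℂ) (φ n x k) :=
      funext hU
    rw [this]
    refine continuous_matrix fun j k => ?_
    simp only [Matrix.of_apply]
    exact continuous_finsetSum _ fun n _ => (hc n j).mul (hcc n k)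
  have hGc : ∀ n m, Continuous fun x =>
      (∑ j, φ m x j * (starRingEnd ℂ) (φ n x j)) * a n m := fun n m =>
    (continuous_finsetSum _ fun j _ => (hc m j).mul (hcc n j)).mul continuous_const
  have hSc : Continuous fun x =>
      ∑ n, ∑ m, (∑ j, φ m x j * (starRingEnd ℂ) (φ n x j)) * a n m :=
    continuous_finsetSum _ fun n _ => continuous_finsetSum _ fun m _ => hGc n m
  have hmono : (∫ x in (0:ℝ)..L, ((U x ^ 3).trace).re) ≤ ∫ x in (0:ℝ)..L, K1 β ^ 2 *
      (∑ n, ∑ m, (∑ j, φ m x j * (starRingEnd ℂ) (φ n x j)) * a n m).re := by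
    apply intervalIntegral.integral_mono_on hLp.le
    · exact (Complex.continuous_re.comp (hUc.pow 3).matrix_trace).intervalIntegrable _ _
    · exact (continuous_const.mul (Complex.continuous_re.comp hSc)).intervalIntegrable _ _
    · exact fun x _ => hpt x
  refine hmono.trans (le_of_eq ?_)
  rw [intervalIntegral.integral_const_mul]
  congr 1
  have hre : (∫ x in (0:ℝ)..L,
      (∑ n, ∑ m, (∑ j, φ m x j * (starRingEnd ℂ) (φ n x j)) * a n m).re) =
      (∫ x in (0:ℝ)..L,
      (∑ n, ∑ m, (∑ j, φ m x j * (starRingEnd ℂ) (φ n x j)) * a n m)).re :=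
    Complex.reCLM.intervalIntegral_comp_comm (hSc.intervalIntegrable _ _)
  have hval : (∫ x in (0:ℝ)..L,
      (∑ n, ∑ m, (∑ j, φ m x j * (starRingEnd ℂ) (φ n x j)) * a n m)) = ∑ n, a n n := by
    rw [intervalIntegral.integral_finsetSum fun n _ =>
      (continuous_finsetSum _ fun m _ => hGc n m).intervalIntegrable _ _]
    refine Finset.sum_congr rfl fun n _ => ?_
    rw [intervalIntegral.integral_finsetSum fun m _ => (hGc n m).intervalIntegrable _ _]
    simp_rw [intervalIntegral.integral_mul_const, hortho]
    simp
  rw [hre, hval, Complex.re_sum]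
  refine Finset.sum_congr rfl fun n _ => ?_
  have hone : ∀ f : Fin M → ℝ → ℂ, (∀ j, Continuous (f j)) →
      (∫ y in (0:ℝ)..L, ∑ j, f j y * (starRingEnd ℂ) (f j y)) =
        ((∑ j, ∫ y in (0:ℝ)..L, ‖f j y‖ ^ 2 : ℝ) : ℂ) := by
    intro f hf
    have hg : ∀ j, Continuous fun y => f j y * (starRingEnd ℂ) (f j y) := fun j =>
      (hf j).mul (Complex.continuous_conj.comp (hf j))
    rw [Complex.ofReal_sum, intervalIntegral.integral_finsetSum fun j _ =>
      (hg j).intervalIntegrable _ _]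
    refine Finset.sum_congr rfl fun j _ => ?_
    rw [← intervalIntegral.integral_ofReal]
    congr 1
    funext y
    rw [Complex.ofReal_pow, ← Complex.mul_conj']
  have hn1 : ∑ j, ∫ y in (0:ℝ)..L, ‖φ n y j‖ ^ 2 = 1 := by
    have h1 := hone (fun j t => φ n t j) (hc n)
    rw [hortho n n, if_pos rfl] at h1
    exact_mod_cast h1.symm
  have hrhs : ∑ j, ∫ x in (0:ℝ)..L,
        (‖deriv (fun t => φ n t j) x‖ ^ 2 + α ^ 2 * β * ‖φ n x j‖ ^ 2) =
      (∑ j, ∫ x in (0:ℝ)..L, ‖deriv (fun t => φ n t j) x‖ ^ 2) + α ^ 2 * β := by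
    conv_rhs => rw [← mul_one (α ^ 2 * β), ← hn1]
    rw [Finset.mul_sum, ← Finset.sum_add_distrib]
    refine Finset.sum_congr rfl fun j _ => ?_
    rw [intervalIntegral.integral_add, intervalIntegral.integral_const_mul]
    · exact ((hcd n j).norm.pow 2).intervalIntegrable _ _
    · exact (continuous_const.mul ((hc n j).norm.pow 2)).intervalIntegrable _ _
  rw [hrhs, ha]
  simp only [if_true, mul_one]
  rw [hone (fun j => deriv (fun t => φ n t j)) (hcd n), ← Complex.ofReal_add, Complex.ofReal_re]
end

section
/- Let 0 ≤ β < 1 and M, N ≥ 1. Let φ_1, …, φ_N : ℝ → ℂ^M be C¹ functions, 2π-periodic, satisfying ∫_0^{2π} φ_n(x, j) dx = 0 for all n and all components j, and orthonormal in L²((0, 2π); ℂ^M), i.e. ∫_0^{2π} ⟨φ_n(x), φ_m(x)⟩ dx = δ_{nm}. Define the M×M matrix U(x) := ∑_{n=1}^N φ_n(x) φ_n(x)^*. Then ∫_0^{2π} Tr[U(x)³] dx ≤ K₂(β)² · ∑_{n=1}^N ∑_{j=1}^M ∫_0^{2π} ( |φ_n'(x, j)|² − β |φ_n(x, j)|²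 ) dx, where φ_n(x, j) denotes the j-th component of φ_n(x). -/
open Real MeasureTheory

/-- The sharp constant `K₂(β) = sup_{λ>0} (√λ/π) · ∑_{k ∈ ℤ, k ≠ 0} 1/(k² − β + λ)`. -/
noncomputable def K2 (β : ℝ) : ℝ :=
  ⨆ l : Set.Ioi (0 : ℝ),
    Real.sqrt l / π * ∑' k : {k : ℤ // k ≠ 0}, 1 / ((k.1 : ℝ) ^ 2 - β + l)

lemma aux_tele (s : ℝ) (hs : 0 < s) :
    Summable (fun n : ℕ => 1 / (((n:ℝ)+1)^2 + s^2)) ∧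
    s * ∑' n : ℕ, 1 / (((n:ℝ)+1)^2 + s^2) ≤ 2 := by
  have h1 : ∀ n : ℕ, ∑ i ∈ Finset.range n, 1 / (((i:ℝ)+1)^2 + s^2) ≤ 2 / s - 2 / (n + s) := by
    intro n
    induction n with
    | zero => simp
    | succ n ih =>
      rw [Finset.sum_range_succ]
      have hn : (0:ℝ) ≤ n := Nat.cast_nonneg n
      have : 1 / (((n:ℝ)+1)^2 + s^2) ≤ 2 / (n + s) - 2 / ((n + 1 : ℕ) + s) := by
        push_cast
        rw [div_sub_div _ _ (by positivity) (by positivity), div_le_div_iff₀ (by positivity) (by positivity)]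
        nlinarith [sq_nonneg ((n:ℝ) + 1 - s)]
      linarith
  have h2 : ∀ n : ℕ, ∑ i ∈ Finset.range n, 1 / (((i:ℝ)+1)^2 + s^2) ≤ 2 / s := by
    intro n
    have : 0 ≤ 2 / (n + s) := by positivity
    linarith [h1 n]
  refine ⟨summable_of_sum_range_le (fun n => by positivity) h2, ?_⟩
  have := Real.tsum_le_of_sum_range_le (fun n => by positivity) h2
  calc _ ≤ s * (2 / s) := by gcongr
    _ = 2 := by field_simp

lemma aux_nz (s : ℝ) (hs : 0 < s) :
    Summable (fun k : {k : ℤ // k ≠ 0} => 1 / ((k.1:ℝ)^2 + s^2)) ∧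
    s * ∑' k : {k : ℤ // k ≠ 0}, 1 / ((k.1:ℝ)^2 + s^2) ≤ 4 := by
  obtain ⟨hS, hb⟩ := aux_tele s hs
  set g : ℤ → ℝ := Set.indicator {k : ℤ | k ≠ 0} (fun k => 1 / ((k:ℝ)^2 + s^2)) with hg
  have hA : ∀ n : ℕ, g (n + 1 : ℕ) = 1 / (((n:ℝ)+1)^2 + s^2) := by
    intro n
    rw [hg, Set.indicator_of_mem (by simp; omega)]
    push_cast; rfl
  have hB : ∀ n : ℕ, g (-(n + 1)) = 1 / (((n:ℝ)+1)^2 + s^2) := by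
    intro n
    rw [hg, Set.indicator_of_mem (by simp; omega)]
    push_cast; congr 2; ring
  have h0 : g (0:ℕ) = 0 := by simp [hg]
  have hsA : Summable (fun n : ℕ => g n) := by
    rw [← summable_nat_add_iff 1]
    exact hS.congr (fun n => (hA n).symm)
  have hsB : Summable (fun n : ℕ => g (-(n + 1))) := hS.congr (fun n => (hB n).symm)
  have hsum : Summable g := Summable.of_nat_of_neg_add_one hsA hsB
  have hts := tsum_of_nat_of_neg_add_one hsA hsB
  rw [hsA.tsum_eq_zero_add, h0] at hts
  simp_rw [hA, hB] at hts
  refine ⟨?_, ?_⟩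
  · exact summable_subtype_iff_indicator.2 hsum
  · have : ∑' k : {k : ℤ // k ≠ 0}, 1 / ((k.1:ℝ)^2 + s^2) = ∑' k, g k :=
      tsum_subtype {k : ℤ | k ≠ 0} (fun k => 1 / ((k:ℝ)^2 + s^2))
    rw [this, hts]
    linarith

lemma one_le_ksq (k : {k : ℤ // k ≠ 0}) : (1:ℝ) ≤ (k.1:ℝ)^2 := by
  have : (1:ℤ) ≤ k.1^2 := by have := sq_pos_of_ne_zero k.2 (a := k.1); omega
  exact_mod_cast this

lemma K2_main (β : ℝ) (hβ0 : 0 ≤ β) (hβ1 : β < 1) (s : ℝ) (hs : 0 < s) :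
    Summable (fun k : {k : ℤ // k ≠ 0} => 1 / ((k.1:ℝ)^2 - β + s^2)) ∧
    s * ∑' k : {k : ℤ // k ≠ 0}, 1 / ((k.1:ℝ)^2 - β + s^2) ≤ π * K2 β := by
  have key : ∀ s : ℝ, 0 < s → 
    Summable (fun k : {k : ℤ // k ≠ 0} => 1 / ((k.1:ℝ)^2 - β + s^2)) ∧
    s * ∑' k : {k : ℤ // k ≠ 0}, 1 / ((k.1:ℝ)^2 - β + s^2) ≤ (1-β)⁻¹ * 4 := by
    intro s hs
    obtain ⟨h1, h2⟩ := aux_nz s hs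
    have hc : 0 < 1 - β := by linarith
    have hle : ∀ k : {k : ℤ // k ≠ 0}, 1 / ((k.1:ℝ)^2 - β + s^2) ≤
        (1-β)⁻¹ * (1 / ((k.1:ℝ)^2 + s^2)) := by
      intro k
      have hk := one_le_ksq k
      rw [← one_div, one_div_mul_one_div]
      apply one_div_le_one_div_of_le (by positivity)
      nlinarith [sq_nonneg s]
    have hnn : ∀ k : {k : ℤ // k ≠ 0}, 0 ≤ 1 / ((k.1:ℝ)^2 - β + s^2) := by
      intro k
      have hk := one_le_ksq k
      have : 0 ≤ ((k.1:ℝ)^2 - β + s^2) := by nlinarith [sq_nonneg s]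
      positivity
    have hsm := Summable.of_nonneg_of_le hnn hle (h1.mul_left _)
    refine ⟨hsm, ?_⟩
    calc _ ≤ s * ∑' k : {k : ℤ // k ≠ 0}, (1-β)⁻¹ * (1 / ((k.1:ℝ)^2 + s^2)) := by
          refine mul_le_mul_of_nonneg_left ?_ hs.le
          exact hsm.tsum_le_tsum hle (h1.mul_left _)
      _ = (1-β)⁻¹ * (s * ∑' k : {k : ℤ // k ≠ 0}, (1 / ((k.1:ℝ)^2 + s^2))) := by
          rw [tsum_mul_left]; ring
      _ ≤ _ := by gcongr
  refine ⟨(key s hs).1, ?_⟩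
  have hbdd : BddAbove (Set.range fun l : Set.Ioi (0 : ℝ) =>
    Real.sqrt l / π * ∑' k : {k : ℤ // k ≠ 0}, 1 / ((k.1 : ℝ) ^ 2 - β + l)) := by
    refine ⟨(1-β)⁻¹ * 4 / π, ?_⟩
    rintro _ ⟨⟨l, hl⟩, rfl⟩
    have hl' : 0 < l := hl
    have := (key (√l) (Real.sqrt_pos.2 hl')).2
    rw [Real.sq_sqrt hl'.le] at this
    simp only
    rw [div_mul_eq_mul_div]
    gcongr
  have := le_ciSup hbdd ⟨s^2, by simp; positivity⟩
  simp only [Real.sqrt_sq hs.le] at this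
  rw [div_mul_eq_mul_div, div_le_iff₀ Real.pi_pos] at this
  rw [mul_comm π]
  exact this

open scoped ComplexOrder in
lemma mat_lemma {N : ℕ} (R A : Matrix (Fin N) (Fin N) ℂ) (hR : R.PosSemidef) (C : ℝ)
    (h : ∀ ξ : Fin N → ℂ, ((star ξ ⬝ᵥ (R.mulVec ξ)).re)^2 ≤
      C * (star ξ ⬝ᵥ (A.mulVec ξ)).re * (star ξ ⬝ᵥ ξ).re) :
    ((R^3).trace).re ≤ C * ((R * A).trace).re := by
  have hH := hR.isHermitian
  set V : Matrix (Fin N) (Fin N) ℂ := (hH.eigenvectorUnitary).1 with hV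
  set D : Matrix (Fin N) (Fin N) ℂ := Matrix.diagonal (RCLike.ofReal ∘ hH.eigenvalues) with hD
  have hVV : star V * V = 1 := Unitary.coe_star_mul_self _
  have hRV : R = V * D * star V := by
    have := hH.spectral_theorem
    rwa [Unitary.conjStarAlgAut_apply] at this
  have e1 : (R^3).trace = (D^3).trace := by
    rw [show R^3 = V * (D^3 * star V) by
      rw [hRV]
      calc _ = V * D * (star V * V) * D * (star V * V) * D * star V := by noncomm_ring
        _ = _ := by rw [hVV]; noncomm_ring]
    rw [Matrix.trace_mul_comm, mul_assoc, hVV, mul_one]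
  have e2 : (R * A).trace = (D * (star V * A * V)).trace := by
    rw [hRV, show V * D * star V * A = V * (D * star V * A) by noncomm_ring, Matrix.trace_mul_comm]
    congr 1; noncomm_ring
  rw [e1, e2]
  have e3 : D^3 = Matrix.diagonal (fun i => ((hH.eigenvalues i ^ 3 : ℝ) : ℂ)) := by
    rw [hD, Matrix.diagonal_pow]; congr 1; ext i; simp
  rw [e3, Matrix.trace_diagonal, hD]
  simp only [Matrix.trace, Matrix.diag_apply, Matrix.diagonal_mul, Complex.re_sum, Finset.mul_sum]
  apply Finset.sum_le_sum
  intro i _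
  have hi := h (fun n => V n i)
  have q1 : ∀ B : Matrix (Fin N) (Fin N) ℂ, star (fun n => V n i) ⬝ᵥ (B.mulVec (fun n => V n i)) = (star V * B * V) i i := by
    intro B
    rw [mul_assoc]
    rfl
  have q2 : (star V * R * V) = D := by
    rw [hRV]
    calc _ = (star V * V) * D * (star V * V) := by noncomm_ring
      _ = _ := by rw [hVV]; simp
  have q3 : star (fun n => V n i) ⬝ᵥ (fun n => V n i) = 1 := by
    have := q1 1
    simpa [hVV] using this
  rw [q1, q1, q2, q3, hD] at hi
  simp at hi
  have hp := hR.eigenvalues_nonneg i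
  simp [-Complex.ofReal_pow]
  nlinarith [mul_le_mul_of_nonneg_left hi hp]
lemma lift_coeff (f : ℝ → ℂ) (hper : Function.Periodic f (2*π)) (k : ℤ) [Fact (0 < 2*π)] :
    fourierCoeff (T := 2*π) hper.lift k = fourierCoeffOn Real.two_pi_pos f k := by
  rw [fourierCoeff_eq_intervalIntegral _ _ 0, fourierCoeffOn_eq_integral]
  simp only [fourier_coe_apply, sub_zero, zero_add, Function.Periodic.lift_coe]

lemma norm_le_tsum (f : ℝ → ℂ) (hf : Continuous f) (hper : Function.Periodic f (2*π))
    (hs : Summable (fun k => ‖fourierCoeffOn Real.two_pi_pos f k‖)) (y : ℝ) :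
    ‖f y‖ ≤ ∑' k, ‖fourierCoeffOn Real.two_pi_pos f k‖ := by
  have : Fact (0 < 2*π) := ⟨Real.two_pi_pos⟩
  let F : C(AddCircle (2*π), ℂ) := ⟨hper.lift, continuous_coinduced_dom.mpr hf⟩
  have hF : ∀ k, fourierCoeff F k = fourierCoeffOn Real.two_pi_pos f k := fun k => lift_coeff f hper k
  have h1 : Summable (fourierCoeff F) := by
    apply Summable.of_norm
    simpa only [hF] using hs
  have h2 := has_pointwise_sum_fourier_series_of_summable h1 (y : AddCircle (2*π))
  have h3 : F (y : AddCircle (2*π)) = f y := rfl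
  rw [← h3, ← h2.tsum_eq]
  have hn : ∀ k, ‖fourierCoeff F k • fourier k (y : AddCircle (2*π))‖ = ‖fourierCoeffOn Real.two_pi_pos f k‖ := by
    intro k
    rw [hF, norm_smul]
    rw [fourier_apply, Circle.norm_coe, mul_one]
  calc _ ≤ ∑' k, ‖fourierCoeff F k • fourier k (y : AddCircle (2*π))‖ := norm_tsum_le_tsum_norm (by simpa only [hn] using hs)
    _ = _ := by simp only [hn]

lemma memLp_cont (f : ℝ → ℂ) (hf : Continuous f) :
    MemLp f 2 (volume.restrict (Set.Ioc 0 (2*π))) :=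
  (memLp_two_iff_integrable_sq_norm hf.aestronglyMeasurable).2
    (Continuous.integrableOn_Ioc (by fun_prop))

lemma scalar_ineq (β : ℝ) (hβ0 : 0 ≤ β) (hβ1 : β < 1) (f : ℝ → ℂ) (hf : ContDiff ℝ 1 f)
    (hper : Function.Periodic f (2*π)) (hmean : ∫ x in (0:ℝ)..(2*π), f x = 0) :
    0 ≤ ∫ x in (0:ℝ)..(2*π), (‖deriv f x‖^2 - β * ‖f x‖^2) ∧
    ∀ s : ℝ, 0 < s → ∀ y, 2 * s * ‖f y‖^2 ≤ K2 β * 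
      ((∫ x in (0:ℝ)..(2*π), (‖deriv f x‖^2 - β * ‖f x‖^2)) + s^2 * ∫ x in (0:ℝ)..(2*π), ‖f x‖^2) := by
  have hpi := Real.two_pi_pos
  have hfc : Continuous f := hf.continuous
  have hdc : Continuous (deriv f) := hf.continuous_deriv le_rfl
  set c : ℤ → ℂ := fourierCoeffOn Real.two_pi_pos f with hc
  set d : ℤ → ℂ := fourierCoeffOn Real.two_pi_pos (deriv f) with hd
  have P1 : HasSum (fun k => ‖c k‖^2) ((2*π)⁻¹ * ∫ x in (0:ℝ)..(2*π), ‖f x‖^2) := by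
    simpa using hasSum_sq_fourierCoeffOn hpi (memLp_cont f hfc)
  have P2 : HasSum (fun k => ‖d k‖^2) ((2*π)⁻¹ * ∫ x in (0:ℝ)..(2*π), ‖deriv f x‖^2) := by
    simpa using hasSum_sq_fourierCoeffOn hpi (memLp_cont _ hdc)
  have hf0 : f (2*π) = f 0 := by simpa using hper 0
  have hc0 : c 0 = 0 := by
    rw [hc, fourierCoeffOn_eq_integral]; simp [hmean]
  have hdk : ∀ k, ‖d k‖^2 = (k:ℝ)^2 * ‖c k‖^2 := by
    intro k
    by_cases hk : k = 0
    · subst hk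
      have : d 0 = 0 := by
        rw [hd, fourierCoeffOn_eq_integral]
        have := intervalIntegral.integral_eq_sub_of_hasDerivAt (f := f) (f' := deriv f) (a := 0) (b := 2*π)
          (fun x _ => (hf.differentiable one_ne_zero x).hasDerivAt) (hdc.intervalIntegrable _ _)
        simp [this, hf0]
      simp [this]
    · have := fourierCoeffOn_of_hasDerivAt hpi (f := f) (f' := deriv f) hk
        (fun x _ => (hf.differentiable one_ne_zero x).hasDerivAt) (hdc.intervalIntegrable _ _)
      rw [← hc, ← hd, hf0] at this
      have hkc : (k:ℂ) ≠ 0 := by exact_mod_cast hk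
      have hpc : (π:ℂ) ≠ 0 := by exact_mod_cast Real.pi_ne_zero
      have h2 : d k = Complex.I * k * c k := by
        rw [this]
        push_cast
        field_simp
        simp
        ring
      rw [h2]
      simp [mul_pow]
  have hw : ∀ t : ℝ, HasSum (fun k : ℤ => ((k:ℝ)^2 - β + t) * ‖c k‖^2)
      ((2*π)⁻¹ * ((∫ x in (0:ℝ)..(2*π), (‖deriv f x‖^2 - β * ‖f x‖^2)) + t * ∫ x in (0:ℝ)..(2*π), ‖f x‖^2)) := by
    intro t
    have h := P2.add (P1.mul_left (t - β))
    rw [intervalIntegral.integral_sub (Continuous.intervalIntegrable (by fun_prop) _ _)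
      (Continuous.intervalIntegrable (by fun_prop) _ _), intervalIntegral.integral_const_mul]
    convert! h using 1
    · ext k; rw [hdk]; ring
    · ring
  have hw' : ∀ t : ℝ, HasSum (fun k : {k : ℤ // k ≠ 0} => ((k.1:ℝ)^2 - β + t) * ‖c k.1‖^2)
      ((2*π)⁻¹ * ((∫ x in (0:ℝ)..(2*π), (‖deriv f x‖^2 - β * ‖f x‖^2)) + t * ∫ x in (0:ℝ)..(2*π), ‖f x‖^2)) := by
    intro t
    refine (hasSum_subtype_iff_of_support_subset (s := {k : ℤ | k ≠ 0}) ?_).2 (hw t)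
    intro k hk hk0
    apply hk
    have hk1 : k = 0 := hk0
    simp [hk1, hc0]
  have hpos : ∀ k : {k : ℤ // k ≠ 0}, 0 < (k.1:ℝ)^2 - β := fun k => by linarith [one_le_ksq k]
  refine ⟨?_, ?_⟩
  · have := (hw' 0).nonneg (fun k => mul_nonneg (by linarith [hpos k]) (sq_nonneg _))
    have h2 := nonneg_of_mul_nonneg_right this (by positivity)
    simpa using h2
  · intro s hs y
    obtain ⟨hS, hSle⟩ := K2_main β hβ0 hβ1 s hs
    have hq := hw' (s^2)
    set S := ∑' k : {k : ℤ // k ≠ 0}, 1 / ((k.1:ℝ)^2 - β + s^2) with hSdef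
    set E := ((∫ x in (0:ℝ)..(2*π), (‖deriv f x‖^2 - β * ‖f x‖^2)) + s^2 * ∫ x in (0:ℝ)..(2*π), ‖f x‖^2) with hE
    have hwp : ∀ k : {k : ℤ // k ≠ 0}, 0 < (k.1:ℝ)^2 - β + s^2 := fun k => by
      have := hpos k; positivity
    have amgm : ∀ t : ℝ, 0 < t → ∀ k : {k : ℤ // k ≠ 0}, ‖c k.1‖ ≤
        t / 2 * (1 / ((k.1:ℝ)^2 - β + s^2)) + t⁻¹ / 2 * (((k.1:ℝ)^2 - β + s^2) * ‖c k.1‖^2) := by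
      intro t ht k
      have hk := hwp k
      set w := (k.1:ℝ)^2 - β + s^2
      have : t / 2 * (1 / w) + t⁻¹ / 2 * (w * ‖c k.1‖^2) - ‖c k.1‖ = (t - w * ‖c k.1‖)^2 / (2 * t * w) := by
        field_simp; ring
      have h2 : 0 ≤ (t - w * ‖c k.1‖)^2 / (2 * t * w) := by positivity
      linarith
    have hsumr : ∀ t : ℝ, Summable (fun k : {k : ℤ // k ≠ 0} => 
        t / 2 * (1 / ((k.1:ℝ)^2 - β + s^2)) + t⁻¹ / 2 * (((k.1:ℝ)^2 - β + s^2) * ‖c k.1‖^2)) :=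
      fun t => (hS.mul_left _).add (hq.summable.mul_left _)
    have hcs : Summable (fun k : {k : ℤ // k ≠ 0} => ‖c k.1‖) :=
      Summable.of_nonneg_of_le (fun _ => norm_nonneg _) (amgm 1 one_pos) (hsumr 1)
    have hsup : Function.support (fun k => ‖c k‖) ⊆ {k : ℤ | k ≠ 0} := by
      intro k hk hk0
      apply hk
      have hk1 : k = 0 := hk0
      simp [hk1, hc0]
    have hcs' : Summable (fun k => ‖c k‖) :=
      ((hasSum_subtype_iff_of_support_subset hsup).1 hcs.hasSum).summable
    have hy := norm_le_tsum f hfc hper hcs' y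
    rw [← tsum_subtype_eq_of_support_subset hsup] at hy
    have hall : ∀ t : ℝ, 0 < t → 2 * t * ‖f y‖ ≤ t^2 * S + (2*π)⁻¹ * E := by
      intro t ht
      have h1 : ‖f y‖ ≤ t / 2 * S + t⁻¹ / 2 * ((2*π)⁻¹ * E) := by
        refine hy.trans ((hcs.tsum_le_tsum (amgm t ht) (hsumr t)).trans ?_)
        rw [(hS.mul_left _).tsum_add (hq.summable.mul_left _), tsum_mul_left, tsum_mul_left, hq.tsum_eq]
      calc 2 * t * ‖f y‖ ≤ 2 * t * (t / 2 * S + t⁻¹ / 2 * ((2*π)⁻¹ * E)) := by gcongr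
        _ = _ := by field_simp
    have hS0 : 0 ≤ S := tsum_nonneg (fun k => by have := hwp k; positivity)
    have hE0 : 0 ≤ (2*π)⁻¹ * E := hq.nonneg (fun k => mul_nonneg (hwp k).le (sq_nonneg _))
    have hdis := discrim_le_zero (a := S) (b := -2 * ‖f y‖) (c := (2*π)⁻¹ * E) (by
      intro t
      rcases lt_or_ge 0 t with ht | ht
      · nlinarith [hall t ht]
      · have : 0 ≤ (-t) * ‖f y‖ := mul_nonneg (by linarith) (norm_nonneg _)
        have := mul_nonneg hS0 (mul_self_nonneg t)
        nlinarith)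
    have hfin : ‖f y‖^2 ≤ S * ((2*π)⁻¹ * E) := by
      unfold discrim at hdis; nlinarith
    calc 2 * s * ‖f y‖^2 ≤ 2 * s * (S * ((2*π)⁻¹ * E)) := by gcongr
      _ = 2 * (s * S) * ((2*π)⁻¹ * E) := by ring
      _ ≤ 2 * (π * K2 β) * ((2*π)⁻¹ * E) := by gcongr
      _ = K2 β * E := by have := Real.pi_ne_zero; field_simp

open scoped ComplexOrder in
lemma mat_lemma2 {M N : ℕ} (P : Matrix (Fin M) (Fin N) ℂ) (A : Matrix (Fin N) (Fin N) ℂ) (C : ℝ)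
    (h : ∀ ξ : Fin N → ℂ, ((star ξ ⬝ᵥ ((P.conjTranspose * P).mulVec ξ)).re)^2 ≤
      C * (star ξ ⬝ᵥ (A.mulVec ξ)).re * (star ξ ⬝ᵥ ξ).re) :
    (((P.conjTranspose * P)^3).trace).re ≤ C * ((P.conjTranspose * P * A).trace).re :=
  mat_lemma _ A (Matrix.posSemidef_conjTranspose_mul_self P) C h

lemma quad_int {N : ℕ} (g : Fin N → ℝ → ℂ) (hg : ∀ n, Continuous (g n)) (ξ : Fin N → ℂ) :
    (((∫ x in (0:ℝ)..(2*π), ‖∑ n, ξ n * g n x‖^2 : ℝ)) : ℂ) =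
      ∑ m, ∑ n, (starRingEnd ℂ) (ξ m) * (ξ n * ∫ x in (0:ℝ)..(2*π), (starRingEnd ℂ) (g m x) * g n x) := by
  have hc : ∀ n, Continuous fun x => (starRingEnd ℂ) (g n x) :=
    fun n => Complex.continuous_conj.comp (hg n)
  rw [← intervalIntegral.integral_ofReal]
  have : ∀ x, (((‖∑ n, ξ n * g n x‖^2 : ℝ)) : ℂ) =
      ∑ m, ∑ n, (starRingEnd ℂ) (ξ m) * (ξ n * ((starRingEnd ℂ) (g m x) * g n x)) := by
    intro x
    rw [Complex.ofReal_pow, ← Complex.conj_mul', map_sum, Finset.sum_mul_sum]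
    refine Finset.sum_congr rfl fun m _ => Finset.sum_congr rfl fun n _ => ?_
    rw [map_mul]; ring
  simp_rw [this]
  rw [intervalIntegral.integral_finsetSum
    (fun m _ => Continuous.intervalIntegrable (by fun_prop) _ _)]
  refine Finset.sum_congr rfl fun m _ => ?_
  rw [intervalIntegral.integral_finsetSum
    (fun n _ => Continuous.intervalIntegrable (by fun_prop) _ _)]
  refine Finset.sum_congr rfl fun n _ => ?_
  rw [intervalIntegral.integral_const_mul, intervalIntegral.integral_const_mul]

theorem stmt_12 (β : ℝ) (hβ0 : 0 ≤ β) (hβ1 : β < 1)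
    (M N : ℕ) (hM : 1 ≤ M) (hN : 1 ≤ N)
    (φ : Fin N → ℝ → Fin M → ℂ) (hφ : ∀ n, ContDiff ℝ 1 (φ n))
    (hper : ∀ n, Function.Periodic (φ n) (2 * π))
    (hmean : ∀ n j, (∫ x in (0:ℝ)..(2 * π), φ n x j) = 0)
    (hortho : ∀ n m, (∫ x in (0:ℝ)..(2 * π), ∑ j, φ n x j * (starRingEnd ℂ) (φ m x j)) =
      if n = m then 1 else 0)
    (U : ℝ → Matrix (Fin M) (Fin M) ℂ)
    (hU : ∀ x, U x = Matrix.of fun j k => ∑ n, φ n x j * (starRingEnd ℂ) (φ n x k)) :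
    (∫ x in (0:ℝ)..(2 * π), ((U x ^ 3).trace).re) ≤
      K2 β ^ 2 * ∑ n, ∑ j, ∫ x in (0:ℝ)..(2 * π),
        (‖deriv (fun t => φ n t j) x‖ ^ 2 - β * ‖φ n x j‖ ^ 2) := by
  have hcd : ∀ n j, ContDiff ℝ 1 (fun t => φ n t j) := fun n j => contDiff_pi.1 (hφ n) j
  have hct : ∀ n j, Continuous (fun t => φ n t j) := fun n j => (hcd n j).continuous
  have hctd : ∀ n j, Continuous (deriv (fun t => φ n t j)) :=
    fun n j => (hcd n j).continuous_deriv le_rfl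
  have hcc : ∀ n j, Continuous (fun t => (starRingEnd ℂ) (φ n t j)) :=
    fun n j => Complex.continuous_conj.comp (hct n j)
  have hcm : ∀ m n j, Continuous (fun t => (starRingEnd ℂ) (φ m t j) * φ n t j) :=
    fun m n j => (hcc m j).mul (hct n j)
  have hcm2 : ∀ n k j l, Continuous (fun t => φ n t j * (starRingEnd ℂ) (φ k t l)) :=
    fun n k j l => (hct n j).mul (hcc k l)
  have hcx : ∀ (ξ : Fin N → ℂ) n j, Continuous (fun t => ξ n * φ n t j) :=
    fun ξ n j => continuous_const.mul (hct n j)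
  set G : Fin M → Matrix (Fin N) (Fin N) ℂ := fun j => Matrix.of fun m n =>
    ∫ x in (0:ℝ)..(2*π), (starRingEnd ℂ) (φ m x j) * φ n x j with hG
  set H : Fin M → Matrix (Fin N) (Fin N) ℂ := fun j => Matrix.of fun m n =>
    ∫ x in (0:ℝ)..(2*π), (starRingEnd ℂ) (deriv (fun t => φ m t j) x) * deriv (fun t => φ n t j) x with hH
  set A : Matrix (Fin N) (Fin N) ℂ := ∑ j, (H j - (β:ℂ) • G j) with hA
  have hGsum : ∑ j, G j = 1 := by
    ext m n
    rw [Matrix.sum_apply]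
    simp only [hG, Matrix.of_apply]
    rw [← intervalIntegral.integral_finsetSum
      (fun j _ => Continuous.intervalIntegrable (hcm m n j) _ _)]
    have := hortho n m
    simp_rw [mul_comm (φ n _ _)] at this
    rw [this, Matrix.one_apply]
    simp [eq_comm]
  have dot : ∀ (B : Matrix (Fin N) (Fin N) ℂ) (ξ : Fin N → ℂ), star ξ ⬝ᵥ (B.mulVec ξ) =
      ∑ m, ∑ n, (starRingEnd ℂ) (ξ m) * (ξ n * B m n) := by
    intro B ξ
    simp only [dotProduct, Matrix.mulVec, Finset.mul_sum, Pi.star_apply]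
    refine Finset.sum_congr rfl fun m _ => Finset.sum_congr rfl fun n _ => ?_
    rw [mul_comm (B m n)]; rfl
  have qG : ∀ j ξ, star ξ ⬝ᵥ ((G j).mulVec ξ) =
      ((∫ x in (0:ℝ)..(2*π), ‖∑ n, ξ n * φ n x j‖^2 : ℝ) : ℂ) := by
    intro j ξ
    rw [dot, quad_int (fun n x => φ n x j) (fun n => hct n j) ξ]
    rfl
  have hder : ∀ j (ξ : Fin N → ℂ) x, deriv (fun t => ∑ n, ξ n * φ n t j) x =
      ∑ n, ξ n * deriv (fun t => φ n t j) x := by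
    intro j ξ x
    rw [deriv_fun_sum (fun n _ => ((hcd n j).differentiable one_ne_zero x).const_mul _)]
    refine Finset.sum_congr rfl fun n _ => ?_
    rw [deriv_const_mul _ ((hcd n j).differentiable one_ne_zero x)]
  have qH : ∀ j ξ, star ξ ⬝ᵥ ((H j).mulVec ξ) =
      ((∫ x in (0:ℝ)..(2*π), ‖∑ n, ξ n * deriv (fun t => φ n t j) x‖^2 : ℝ) : ℂ) := by
    intro j ξ
    rw [dot, quad_int (fun n => deriv (fun t => φ n t j)) (fun n => hctd n j) ξ]
    rfl
  have qA : ∀ ξ, (star ξ ⬝ᵥ (A.mulVec ξ)).re = ∑ j, ∫ x in (0:ℝ)..(2*π),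
      (‖deriv (fun t => ∑ n, ξ n * φ n t j) x‖^2 - β * ‖∑ n, ξ n * φ n x j‖^2) := by
    intro ξ
    rw [hA, Matrix.sum_mulVec, dotProduct_sum, Complex.re_sum]
    refine Finset.sum_congr rfl fun j _ => ?_
    have := fun n => hct n j
    have := fun n => hctd n j
    simp_rw [hder]
    rw [Matrix.sub_mulVec, Matrix.smul_mulVec, dotProduct_sub, dotProduct_smul, qG, qH,
      intervalIntegral.integral_sub (Continuous.intervalIntegrable (by fun_prop) _ _)
      (Continuous.intervalIntegrable (by fun_prop) _ _), intervalIntegral.integral_const_mul]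
    simp
  have q1 : ∀ ξ : Fin N → ℂ, (star ξ ⬝ᵥ ξ).re = ∑ j, ∫ x in (0:ℝ)..(2*π), ‖∑ n, ξ n * φ n x j‖^2 := by
    intro ξ
    have : star ξ ⬝ᵥ ξ = star ξ ⬝ᵥ ((∑ j, G j).mulVec ξ) := by rw [hGsum, Matrix.one_mulVec]
    rw [this, Matrix.sum_mulVec, dotProduct_sum, Complex.re_sum]
    simp [qG]
  -- pointwise
  set Φ : ℝ → Matrix (Fin M) (Fin N) ℂ := fun x => Matrix.of fun j n => φ n x j with hΦ
  have hpt : ∀ x, ((U x ^ 3).trace).re ≤ K2 β ^ 2 * (((Φ x).conjTranspose * Φ x * A).trace).re := by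
    intro y
    have hUΦ : U y = Φ y * (Φ y).conjTranspose := by
      rw [hU]; ext j k; simp [hΦ, Matrix.mul_apply]
    have htr : (U y ^ 3).trace = (((Φ y).conjTranspose * Φ y)^3).trace := by
      rw [hUΦ]
      have : (Φ y * (Φ y).conjTranspose)^3 = Φ y * ((Φ y).conjTranspose * Φ y * (Φ y).conjTranspose * Φ y * (Φ y).conjTranspose) := by
        simp only [pow_succ, pow_zero, one_mul, Matrix.mul_assoc]
      rw [this, Matrix.trace_mul_comm]
      simp only [pow_succ, pow_zero, one_mul, Matrix.mul_assoc]
    rw [htr]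
    refine mat_lemma2 (Φ y) A _ ?_
    intro ξ
    have hF : (star ξ ⬝ᵥ (((Φ y).conjTranspose * Φ y).mulVec ξ)).re =
        ∑ j, ‖∑ n, ξ n * φ n y j‖^2 := by
      rw [← Matrix.mulVec_mulVec, Matrix.dotProduct_mulVec, ← Matrix.star_mulVec]
      simp only [dotProduct, Complex.re_sum, Pi.star_apply]
      refine Finset.sum_congr rfl fun j _ => ?_
      have e : (Φ y).mulVec ξ j = ∑ n, ξ n * φ n y j := by
        simp [Matrix.mulVec, dotProduct, hΦ, mul_comm]
      rw [e]
      have := Complex.conj_mul' (∑ n, ξ n * φ n y j)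
      rw [RCLike.star_def, this, ← Complex.ofReal_pow, Complex.ofReal_re]
    rw [hF, qA, q1]
    have hs := fun j => scalar_ineq β hβ0 hβ1 (fun t => ∑ n, ξ n * φ n t j)
      (by have := fun n => hcd n j; fun_prop)
      (by intro x; simp only [(hper _) x])
      (by
        rw [intervalIntegral.integral_finsetSum
          (fun n _ => Continuous.intervalIntegrable (hcx ξ n j) _ _)]
        simp [hmean])
    set a := ∑ j, ∫ x in (0:ℝ)..(2*π),
      (‖deriv (fun t => ∑ n, ξ n * φ n t j) x‖^2 - β * ‖∑ n, ξ n * φ n x j‖^2) with ha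
    set b := ∑ j, ∫ x in (0:ℝ)..(2*π), ‖∑ n, ξ n * φ n x j‖^2 with hb
    set F := ∑ j, ‖∑ n, ξ n * φ n y j‖^2 with hFd
    have ha0 : 0 ≤ a := Finset.sum_nonneg fun j _ => (hs j).1
    have hb0 : 0 ≤ b := Finset.sum_nonneg fun j _ =>
      intervalIntegral.integral_nonneg Real.two_pi_pos.le (fun x _ => sq_nonneg _)
    have hF0 : 0 ≤ F := Finset.sum_nonneg fun j _ => sq_nonneg _
    have hK0 : 0 ≤ K2 β := by
      obtain ⟨-, h⟩ := K2_main β hβ0 hβ1 1 one_pos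
      have h0 : 0 ≤ ∑' k : {k : ℤ // k ≠ 0}, 1 / ((k.1:ℝ)^2 - β + 1^2) :=
        tsum_nonneg (fun k => by
          have := one_le_ksq k
          have : 0 ≤ (k.1:ℝ)^2 - β + 1^2 := by linarith
          positivity)
      rw [one_mul] at h
      exact nonneg_of_mul_nonneg_right (h0.trans h) Real.pi_pos
    have hall : ∀ s : ℝ, 0 < s → 2 * s * F ≤ K2 β * (a + s^2 * b) := by
      intro s hs0
      rw [hFd, ha, hb, Finset.mul_sum, Finset.mul_sum, ← Finset.sum_add_distrib, Finset.mul_sum]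
      exact Finset.sum_le_sum fun j _ => (hs j).2 s hs0 y
    have hdis := discrim_le_zero (a := K2 β * b) (b := -2 * F) (c := K2 β * a) (by
      intro t
      rcases lt_or_ge 0 t with ht | ht
      · nlinarith [hall t ht]
      · have h1 : 0 ≤ (-t) * F := mul_nonneg (by linarith) hF0
        have h2 := mul_nonneg (mul_nonneg hK0 hb0) (mul_self_nonneg t)
        have h3 := mul_nonneg hK0 ha0
        nlinarith)
    unfold discrim at hdis
    nlinarith
  -- integrate
  have hΦc : Continuous Φ := by
    apply continuous_matrix; intro j n; exact hct n j
  have hUc : Continuous U := by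
    have : U = fun x => Matrix.of fun j k => ∑ n, φ n x j * (starRingEnd ℂ) (φ n x k) := funext hU
    rw [this]
    apply continuous_matrix; intro j k
    simp only [Matrix.of_apply]
    exact continuous_finsetSum _ fun n _ => hcm2 n n j k
  have hRc : Continuous fun x => ((Φ x).conjTranspose * Φ x * A).trace :=
    ((hΦc.matrix_conjTranspose.matrix_mul hΦc).matrix_mul continuous_const).matrix_trace
  have hint : (∫ x in (0:ℝ)..(2 * π), ((U x ^ 3).trace).re) ≤
      ∫ x in (0:ℝ)..(2 * π), K2 β ^ 2 * (((Φ x).conjTranspose * Φ x * A).trace).re := by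
    apply intervalIntegral.integral_mono_on Real.two_pi_pos.le
    · exact (Complex.continuous_re.comp (hUc.pow 3).matrix_trace).intervalIntegrable _ _
    · exact (continuous_const.mul (Complex.continuous_re.comp hRc)).intervalIntegrable _ _
    · exact fun x _ => hpt x
  refine hint.trans (le_of_eq ?_)
  rw [intervalIntegral.integral_const_mul]
  congr 1
  have hre := Complex.reCLM.intervalIntegral_comp_comm (hRc.intervalIntegrable 0 (2*π) (μ := volume))
  simp only [Complex.reCLM_apply] at hre
  rw [hre]
  have htrI : ∫ x in (0:ℝ)..(2*π), ((Φ x).conjTranspose * Φ x * A).trace = A.trace := by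
    have e : ∀ x, ((Φ x).conjTranspose * Φ x * A).trace =
        ∑ n, ∑ m, (∑ j, φ m x j * (starRingEnd ℂ) (φ n x j)) * A m n := by
      intro x
      simp only [Matrix.trace, Matrix.diag_apply, Matrix.mul_apply (N := A)]
      refine Finset.sum_congr rfl fun n _ => Finset.sum_congr rfl fun m _ => ?_
      congr 1
      rw [Matrix.mul_apply]
      refine Finset.sum_congr rfl fun j _ => ?_
      rw [mul_comm]; rfl
    have hc1 : ∀ n m, Continuous fun x => (∑ j, φ m x j * (starRingEnd ℂ) (φ n x j)) * A m n :=
      fun n m => (continuous_finsetSum _ fun j _ => hcm2 m n j j).mul continuous_const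
    simp_rw [e]
    rw [intervalIntegral.integral_finsetSum (fun n _ => 
      (continuous_finsetSum _ fun m _ => hc1 n m).intervalIntegrable _ _)]
    refine Finset.sum_congr rfl fun n _ => ?_
    rw [intervalIntegral.integral_finsetSum (fun m _ => (hc1 n m).intervalIntegrable _ _)]
    simp_rw [intervalIntegral.integral_mul_const, hortho]
    simp
  rw [htrI, Matrix.trace, Complex.re_sum]
  refine Finset.sum_congr rfl fun n _ => ?_
  have := qA (Pi.single n 1)
  simpa [Pi.single_apply] using this
end
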